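/- arXiv:2104.11361 — 2 statements merged into one kernel-verified Lean document; each statement's English description precedes it below -/
import Mathlib

section
/- Let C be an Ab4 abelian category, ω, X ⊆ C with ω X-projective (Ext^i(W,X')=0 for W∈ω, X'∈X, i>0), and T ∈ C admitting an infinite exact sequence ⋯ → W_1 → W_0 → T → 0 with all W_i ∈ ω ∪ {0}. Then there exists an object S ∈ C such that T^⊥ ∩ X = S^{⊥₁} ∩ X. -/
open CategoryTheory CategoryTheory.Limits

universe w v u

variable {C : Type u} [Category.{v} C] [Abelian C] [HasExt.{w} C]

/-- `Ext^i(M, N) = 0`. -/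
def extZero (M N : C) (i : ℕ) : Prop := Subsingleton (Abelian.Ext M N i)

/-- `0 → A → B → D → 0` is a short exact sequence. -/
def IsSES {A B D : C} (f : A ⟶ B) (g : B ⟶ D) : Prop :=
  ∃ w : f ≫ g = 0, (ShortComplex.mk f g w).ShortExact

/-- There exists a short exact sequence `0 → A → B → D → 0`. -/
def SES (A B D : C) : Prop := ∃ (f : A ⟶ B) (g : B ⟶ D), IsSES f g

/-- The right orthogonal class `𝒯^⊥` (vanishing of `Ext^i` for all `i > 0`). -/
def rPerp (𝒯 : Set C) : Set C := {N | ∀ M ∈ 𝒯, ∀ i, 0 < i → extZero M N i}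

/-- The right `1`-st orthogonal class `𝒯^{⊥₁}`. -/
def rPerp1 (𝒯 : Set C) : Set C := {N | ∀ M ∈ 𝒯, extZero M N 1}

/-- The left orthogonal class `⊥𝒮`. -/
def lPerp (𝒮 : Set C) : Set C := {M | ∀ N ∈ 𝒮, ∀ i, 0 < i → extZero M N i}

/-- The left `1`-st orthogonal class `⊥₁𝒮`. -/
def lPerp1 (𝒮 : Set C) : Set C := {M | ∀ N ∈ 𝒮, extZero M N 1}

/-- `α` is a relative cogenerator in `𝒳`. -/
def IsRelCogen (α 𝒳 : Set C) : Prop :=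
  α ⊆ 𝒳 ∧ ∀ X ∈ 𝒳, ∃ (W X' : C), W ∈ α ∧ X' ∈ 𝒳 ∧ SES X W X'

/-- `β` is a relative generator in `𝒳`. -/
def IsRelGen (β 𝒳 : Set C) : Prop :=
  β ⊆ 𝒳 ∧ ∀ X ∈ 𝒳, ∃ (X' W : C), W ∈ β ∧ X' ∈ 𝒳 ∧ SES X' W X

/-- `pd_𝒳(𝒯) ≤ n`. -/
def pdLE (𝒳 𝒯 : Set C) (n : ℕ) : Prop :=
  ∀ M ∈ 𝒯, ∀ X ∈ 𝒳, ∀ k, n < k → extZero M X k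

/-- `𝒴` is closed by `n`-quotients in `𝒳`: for any exact sequence
`0 → K n → Y (n-1) → ⋯ → Y 0 → K 0 → 0` (encoded by its short exact pieces
`0 → K (i+1) → Y i → K i → 0`) with all `Y i ∈ 𝒴` and all kernels `K i ∈ 𝒳`
(in particular the end terms), the end term `K 0` is in `𝒴`. -/
def ClosedByQuotients (𝒴 𝒳 : Set C) (n : ℕ) : Prop :=
  ∀ (K Y : ℕ → C),
    (∀ i < n, Y i ∈ 𝒴) →
    (∀ i ≤ n, K i ∈ 𝒳) →
    (∀ i < n, SES (K (i + 1)) (Y i) (K i)) →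
    K 0 ∈ 𝒴

/-- `M` has a `𝒴_𝒳`-coresolution of length `n`, i.e. an exact sequence
`0 → M → Y 0 → ⋯ → Y (n-1) → Z n → 0` with `Z n ∈ 𝒳 ∩ 𝒴`, `Y i ∈ 𝒴`, and all
intermediate images `Z i ∈ 𝒳`. -/
def CoresLen (𝒴 𝒳 : Set C) (M : C) (n : ℕ) : Prop :=
  ∃ (Z Y : ℕ → C), Z 0 = M ∧ Z n ∈ 𝒳 ∩ 𝒴 ∧
    (∀ i < n, Y i ∈ 𝒴) ∧ (∀ i, 0 < i → i < n → Z i ∈ 𝒳) ∧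
    (∀ i < n, SES (Z i) (Y i) (Z (i + 1)))

/-- The `𝒴_𝒳`-coresolution dimension of `M`, as an extended natural number. -/
noncomputable def coresdim (𝒴 𝒳 : Set C) (M : C) : ℕ∞ :=
  sInf {e : ℕ∞ | ∃ m : ℕ, e = (m : ℕ∞) ∧ CoresLen 𝒴 𝒳 M m}

/-- The `𝒳`-injective dimension of `M`, as an extended natural number. -/
noncomputable def relId (𝒳 : Set C) (M : C) : ℕ∞ :=
  sInf {e : ℕ∞ | ∃ m : ℕ, e = (m : ℕ∞) ∧ ∀ X ∈ 𝒳, ∀ k, m < k → extZero X M k}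

/-- `𝒯` is precovering. -/
def Precovering (𝒯 : Set C) : Prop :=
  ∀ M : C, ∃ (Z : C) (f : Z ⟶ M), Z ∈ 𝒯 ∧
    ∀ (Z' : C) (h : Z' ⟶ M), Z' ∈ 𝒯 → ∃ h' : Z' ⟶ Z, h' ≫ f = h

/-- `𝒯` is preenveloping. -/
def Preenveloping (𝒯 : Set C) : Prop :=
  ∀ M : C, ∃ (Z : C) (f : M ⟶ Z), Z ∈ 𝒯 ∧
    ∀ (Z' : C) (h : M ⟶ Z'), Z' ∈ 𝒯 → ∃ h' : Z ⟶ Z', f ≫ h' = h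

/-- `𝒯 = add 𝒯`: closed under finite coproducts and under direct summands (retracts). -/
def IsAddClosed (𝒯 : Set C) : Prop :=
  (∀ A B : C, A ∈ 𝒯 → B ∈ 𝒯 → (A ⊞ B) ∈ 𝒯) ∧
  (∀ (A B : C) (i : A ⟶ B) (r : B ⟶ A), i ≫ r = 𝟙 A → B ∈ 𝒯 → A ∈ 𝒯)

/-- Closed under direct summands (retracts). -/
def IsSmdClosed (𝒯 : Set C) : Prop :=
  ∀ (A B : C) (i : A ⟶ B) (r : B ⟶ A), i ≫ r = 𝟙 A → B ∈ 𝒯 → A ∈ 𝒯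

/-- Closed under extensions. -/
def IsExtClosed (𝒯 : Set C) : Prop :=
  ∀ (A E B : C), A ∈ 𝒯 → B ∈ 𝒯 → SES A E B → E ∈ 𝒯

/-- `ℬ` is `𝒳`-coresolving: it contains an `𝒳`-injective relative cogenerator in `𝒳`,
is closed under mono-cokernels in `ℬ ∩ 𝒳`, and is closed under extensions. -/
def IsCoresolving (ℬ 𝒳 : Set C) : Prop :=
  (∃ α : Set C, α ⊆ ℬ ∩ 𝒳 ∧ (∀ X ∈ 𝒳, ∀ A ∈ α, ∀ i, 0 < i → extZero X A i) ∧
    IsRelCogen α 𝒳) ∧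
  (∀ (M M' M'' : C), M ∈ ℬ ∩ 𝒳 → M' ∈ ℬ ∩ 𝒳 → SES M M' M'' → M'' ∈ ℬ) ∧
  IsExtClosed ℬ

/-- `(𝒜, ℬ)` is a left `𝒳`-complete pair. -/
def LeftComplete (𝒜 ℬ 𝒳 : Set C) : Prop :=
  ∀ X ∈ 𝒳, ∃ B A : C, B ∈ ℬ ∩ 𝒳 ∧ A ∈ 𝒜 ∩ 𝒳 ∧ SES B A X

/-- `(𝒜, ℬ)` is a right `𝒳`-complete pair. -/
def RightComplete (𝒜 ℬ 𝒳 : Set C) : Prop :=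
  ∀ X ∈ 𝒳, ∃ B A : C, B ∈ ℬ ∩ 𝒳 ∧ A ∈ 𝒜 ∩ 𝒳 ∧ SES X B A

/-- `(𝒜, ℬ)` is an `𝒳`-hereditary pair. -/
def IsHereditary (𝒜 ℬ 𝒳 : Set C) : Prop :=
  ∀ A ∈ 𝒜 ∩ 𝒳, ∀ B ∈ ℬ ∩ 𝒳, ∀ i, 1 ≤ i → extZero A B i

/-- `M` has a (possibly infinite) `𝒴_𝒳`-coresolution
`0 → M → Y 0 → Y 1 → ⋯` with `Y i ∈ 𝒴 ∪ {0}` and all images in `𝒳 ∪ {0}`. -/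
def InfCores (𝒳 𝒴 : Set C) (M : C) : Prop :=
  ∃ (Z Y : ℕ → C), Z 0 = M ∧
    (∀ i, Y i ∈ 𝒴 ∨ IsZero (Y i)) ∧
    (∀ i, 0 < i → Z i ∈ 𝒳 ∨ IsZero (Z i)) ∧
    (∀ i, SES (Z i) (Y i) (Z (i + 1)))

/-- The class `(𝒳,𝒴)_∞^∨`. -/
def InfCoresClass (𝒳 𝒴 : Set C) : Set C := {M | M ∈ 𝒳 ∧ InfCores 𝒳 𝒴 M}

/-- The class `(𝒳,𝒴)^∨`. -/
def FinCoresClass (𝒳 𝒴 : Set C) : Set C := {M | M ∈ 𝒳 ∧ ∃ m : ℕ, CoresLen 𝒴 𝒳 M m}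

open Abelian DerivedCategory Pretriangulated in
lemma ext_one_sigma_eq_zero (Z : ℕ → C) [HasCoproduct Z] (X : C) (e : Ext (∐ Z) X 1)
    (he : ∀ i, (Ext.mk₀ (Sigma.ι Z i)).comp e (zero_add 1) = 0) : e = 0 := by
  let := HasDerivedCategory.standard C
  let F := DerivedCategory.singleFunctor C 0
  let h : F.obj (∐ Z) ⟶ (F.obj X)⟦(1 : ℤ)⟧ := e.hom
  have he' : ∀ i, F.map (Sigma.ι Z i) ≫ h = 0 := by
    intro i
    have h1 := congrArg Ext.hom (he i)
    rw [Ext.comp_hom, Ext.mk₀_hom, ShiftedHom.mk₀_comp, Ext.zero_hom] at h1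
    exact h1
  obtain ⟨E, f, g, hT⟩ := distinguished_cocone_triangle₂ h
  have h1 : E.IsLE 0 := TStructure.t.isLE₂ _ hT 0
    (inferInstanceAs (((singleFunctor C 0).obj X).IsLE 0))
    (inferInstanceAs (((singleFunctor C 0).obj (∐ Z)).IsLE 0))
  have h2 : E.IsGE 0 := TStructure.t.isGE₂ _ hT 0
    (inferInstanceAs (((singleFunctor C 0).obj X).IsGE 0))
    (inferInstanceAs (((singleFunctor C 0).obj (∐ Z)).IsGE 0))
  obtain ⟨Y, ⟨φ⟩⟩ := exists_iso_singleFunctor_obj_of_isGE_of_isLE E 0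
  change E ≅ F.obj Y at φ
  have hl : ∀ i, ∃ a : Z i ⟶ Y, F.map a ≫ φ.inv ≫ g = F.map (Sigma.ι Z i) := by
    intro i
    obtain ⟨b, hb⟩ : ∃ b : F.obj (Z i) ⟶ E, F.map (Sigma.ι Z i) = b ≫ g :=
      Triangle.coyoneda_exact₃ _ hT (F.map (Sigma.ι Z i)) (he' i)
    obtain ⟨a, ha⟩ := F.map_surjective (b ≫ φ.hom)
    refine ⟨a, ?_⟩
    rw [ha, hb]
    simp
  choose a ha using hl
  obtain ⟨p, hp⟩ := F.map_surjective (φ.inv ≫ g)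
  have hs : Sigma.desc a ≫ p = 𝟙 _ := by
    apply Sigma.hom_ext
    intro i
    apply F.map_injective
    rw [Sigma.ι_desc_assoc, F.map_comp, hp, ha, Category.comp_id]
  have hgh : g ≫ h = 0 := comp_distTriang_mor_zero₂₃ _ hT
  have h0 : h = 0 := by
    have : F.map (Sigma.desc a) ≫ F.map p ≫ h = h := by
      rw [← Category.assoc, ← F.map_comp, hs, F.map_id, Category.id_comp]
    rw [← this, hp, Category.assoc, hgh, comp_zero, comp_zero]
  apply Ext.ext
  rw [Ext.zero_hom]
  exact h0

open Abelian in
lemma extZero_iff (M N : C) (i : ℕ) : extZero M N i ↔ ∀ e : Ext M N i, e = 0 :=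
  ⟨fun h e => h.elim _ _, fun h => ⟨fun a b => by rw [h a, h b]⟩⟩

open Abelian in
lemma extZero_of_isZero {M : C} (hM : IsZero M) (N : C) (i : ℕ) : extZero M N i := by
  rw [extZero_iff]
  intro e
  rw [← Ext.mk₀_id_comp e, hM.eq_of_src (𝟙 M) 0, Ext.mk₀_zero, Ext.zero_comp]

open Abelian in
lemma extZero_sigma_iff (Z : ℕ → C) [HasCoproduct Z] (X : C) :
    extZero (∐ Z) X 1 ↔ ∀ i, extZero (Z i) X 1 := by
  simp only [extZero_iff]
  constructor
  · intro h i e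
    have h1 := h ((Ext.mk₀ (Sigma.desc (fun j => if hj : j = i then eqToHom (by rw [hj]) else 0) :
      ∐ Z ⟶ Z i)).comp e (zero_add 1))
    have h2 := congrArg (fun t => (Ext.mk₀ (Sigma.ι Z i)).comp t (zero_add 1)) h1
    simpa using h2
  · intro h e
    exact ext_one_sigma_eq_zero Z X e (fun i => h i _)

open Abelian in
lemma extZero_shift {A B D : C} (h : SES A B D) (X : C) (hB : ∀ i, 0 < i → extZero B X i)
    (n : ℕ) (hn : 0 < n) : extZero D X (n + 1) ↔ extZero A X n := by
  obtain ⟨f, g, w, hS⟩ := h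
  have hB1 := (extZero_iff _ _ _).1 (hB n hn)
  have hB2 := (extZero_iff _ _ _).1 (hB (n + 1) (by omega))
  simp only [extZero_iff]
  constructor
  · intro h x
    obtain ⟨y, rfl⟩ := Ext.contravariant_sequence_exact₁ hS X x (add_comm 1 n) (h _)
    rw [hB1 y, Ext.comp_zero]
  · intro h x
    obtain ⟨y, rfl⟩ := Ext.contravariant_sequence_exact₃ hS X x (hB2 _) (add_comm 1 n)
    rw [h y, Ext.comp_zero]

/-- in an Ab4 abelian category, if `ω` is `𝒳`-projective and `T`
admits an infinite exact sequence `⋯ → W 1 → W 0 → T → 0` with all `W i ∈ ω ∪ {0}`,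
then there exists `S` with `T^⊥ ∩ 𝒳 = S^{⊥₁} ∩ 𝒳`. -/
theorem stmt_9 [HasCoproducts.{v} C] [AB4 C] (ω 𝒳 : Set C) (T : C)
    (hωproj : ∀ W ∈ ω, ∀ X ∈ 𝒳, ∀ i, 0 < i → extZero W X i)
    (Z W : ℕ → C) (hZ0 : Z 0 = T)
    (hW : ∀ i, W i ∈ ω ∨ IsZero (W i))
    (hses : ∀ i, SES (Z (i + 1)) (W i) (Z i)) :
    ∃ S : C, rPerp {T} ∩ 𝒳 = rPerp1 {S} ∩ 𝒳 := by
  subst hZ0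
  refine ⟨∐ Z, ?_⟩
  ext X
  simp only [Set.mem_inter_iff, rPerp, rPerp1, Set.mem_ofPred_eq, Set.mem_singleton_iff,
    forall_eq, extZero_sigma_iff]
  refine and_congr_left fun hX => ?_
  have hWX : ∀ i k, 0 < k → extZero (W i) X k := fun i k hk =>
    (hW i).elim (fun h => hωproj _ h X hX k hk) (fun h => extZero_of_isZero h X k)
  have key : ∀ n i, extZero (Z i) X (n + 1) ↔ extZero (Z (i + n)) X 1 := by
    intro n
    induction n with
    | zero => intro i; rfl
    | succ n ih =>
      intro i
      rw [extZero_shift (hses i) X (hWX i) (n + 1) (by omega), ih (i + 1),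
        show i + 1 + n = i + (n + 1) by omega]
  constructor
  · intro h i
    have := (key i 0).1 (h (i + 1) (by omega))
    rwa [zero_add] at this
  · intro h i hi
    obtain ⟨n, rfl⟩ : ∃ n, i = n + 1 := ⟨i - 1, by omega⟩
    exact (key n 0).2 (h _)
end

section
/- Let C be an abelian category, X ⊆ C, and (A,B) a right X-complete, X-hereditary pair with (A∩X)^⊥ ∩ A ∩ X ⊆ B∩X and B closed under direct summands. Then (A∩X)^⊥ ∩ X ⊆ B. -/
open CategoryTheory CategoryTheory.Limits

universe w v u

variable {C : Type u} [Category.{v} C] [Abelian C] [HasExt.{w} C]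

/-- if `(𝒜, ℬ)` is a right `𝒳`-complete, `𝒳`-hereditary pair with
`(𝒜∩𝒳)^⊥ ∩ 𝒜 ∩ 𝒳 ⊆ ℬ ∩ 𝒳` and `ℬ` closed under direct summands, then
`(𝒜∩𝒳)^⊥ ∩ 𝒳 ⊆ ℬ`. -/
theorem stmt_15 (𝒳 𝒜 ℬ : Set C) (hrc : RightComplete 𝒜 ℬ 𝒳)
    (hher : IsHereditary 𝒜 ℬ 𝒳)
    (hsub : rPerp (𝒜 ∩ 𝒳) ∩ 𝒜 ∩ 𝒳 ⊆ ℬ ∩ 𝒳)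
    (hsmd : IsSmdClosed ℬ) :
    rPerp (𝒜 ∩ 𝒳) ∩ 𝒳 ⊆ ℬ := by
  rintro M ⟨hM, hMX⟩
  obtain ⟨B, A, hB, hA, f, g, w, hS⟩ := hrc M hMX
  have hz : Subsingleton (Abelian.Ext A M 1) := hM A hA 1 one_pos
  obtain ⟨x, hx⟩ := Abelian.Ext.contravariant_sequence_exact₁ hS M
    (Abelian.Ext.mk₀ (𝟙 M)) (add_zero 1) (hz.elim _ _)
  obtain ⟨r, rfl⟩ := (Abelian.Ext.mk₀_bijective B M).2 x
  refine hsmd M B f r ?_ hB.1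
  apply (Abelian.Ext.mk₀_bijective M M).1
  rw [← hx, Abelian.Ext.mk₀_comp_mk₀]
end
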